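/- arXiv:1304.1598 — 4 statements merged into one kernel-verified Lean document; each statement's English description precedes it below -/
import Mathlib

section
/- Let X be a real random variable on a probability space with E[X^2] = σ² < ∞ for some σ > 0, and let X̄ be an independent copy of X (i.e. X̄ is independent of X and has the same distribution as X). If for all a, b > 0 the random variable aX + bX̄ has the same distribution as √(a² + b²)·X, then X has the centered Gaussian distribution N(0, σ²), i.e. the law of X is the Gaussian measure on ℝ with mean 0 and variance σ². -/
open MeasureTheory ProbabilityTheory

/-!
After normalising by `√(a² + b²)`, stability for a single pair `a, b ≠ 0` says that the law of `X`
is a fixed point of the map sending a law to that of `p Y + q Z`, for `Y, Z` independent with that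
law and `p² + q² = 1`, `p q ≠ 0`. Taking expectations, a fixed point has mean `0`, because
`p + q ≠ 1`. The characteristic functions `φ, ψ` of two fixed points satisfy
`φ t = φ (p t) φ (q t)` and are bounded by `1`, so
`‖φ t - ψ t‖ ≤ ‖φ (p t) - ψ (p t)‖ + ‖φ (q t) - ψ (q t)‖`.
As `p² + q² = 1` and `|p|, |q| < 1`, any bound `‖φ t - ψ t‖ ≤ ε t²` near `0` spreads to the whole
line. If the first two moments agree, Taylor expansion provides such a bound for every `ε > 0`,
hence `φ = ψ`. The centred Gaussian is a fixed point, and so the only one of its variance.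
-/

open Asymptotics Filter Topology

section FunctionalEquation

variable {E : Type*} [SeminormedAddCommGroup E] [NormedSpace ℝ E] {p q : ℝ}

theorem le_mul_norm_sq_of_le_add_smul_of_eventually {f : E → ℝ} {C : ℝ} (hC : 0 ≤ C)
    (hp : |p| < 1) (hq : |q| < 1) (hpq : p ^ 2 + q ^ 2 ≤ 1)
    (hf : ∀ x, f x ≤ f (p • x) + f (q • x)) (hloc : ∀ᶠ x in 𝓝 0, f x ≤ C * ‖x‖ ^ 2) (x : E) :
    f x ≤ C * ‖x‖ ^ 2 := by
  obtain ⟨δ, hδ, hball⟩ := Metric.eventually_nhds_iff.1 hloc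
  set r := max |p| |q|
  have hr0 : 0 ≤ r := (abs_nonneg p).trans (le_max_left _ _)
  have hr1 : r < 1 := max_lt hp hq
  have contract {s : ℝ} (hs : |s| ≤ r) (n : ℕ) {y : E} (hy : r ^ (n + 1) * ‖y‖ < δ) :
      r ^ n * ‖s • y‖ < δ := by
    refine lt_of_le_of_lt ?_ hy
    rw [norm_smul, Real.norm_eq_abs, pow_succ, mul_assoc]
    gcongr
  have spread (n : ℕ) : ∀ y : E, r ^ n * ‖y‖ < δ → f y ≤ C * ‖y‖ ^ 2 := by
    induction n with
    | zero => exact fun y hy ↦ hball (by simpa using hy)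
    | succ n ih =>
      intro y hy
      calc f y ≤ f (p • y) + f (q • y) := hf y
        _ ≤ C * ‖p • y‖ ^ 2 + C * ‖q • y‖ ^ 2 :=
          add_le_add (ih _ (contract (le_max_left _ _) n hy))
            (ih _ (contract (le_max_right _ _) n hy))
        _ = (p ^ 2 + q ^ 2) * (C * ‖y‖ ^ 2) := by
          simp only [norm_smul, Real.norm_eq_abs, mul_pow, sq_abs]; ring
        _ ≤ C * ‖y‖ ^ 2 := mul_le_of_le_one_left (by positivity) hpq
  have shrink : Tendsto (fun n : ℕ ↦ r ^ n * ‖x‖) atTop (𝓝 0) := by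
    simpa using (tendsto_pow_atTop_nhds_zero_of_lt_one hr0 hr1).mul_const ‖x‖
  obtain ⟨n, hn⟩ := (shrink.eventually_lt_const hδ).exists
  exact spread n x hn

theorem nonpos_of_le_add_smul_of_isLittleO {f : E → ℝ}
    (hp : |p| < 1) (hq : |q| < 1) (hpq : p ^ 2 + q ^ 2 ≤ 1)
    (hf : ∀ x, f x ≤ f (p • x) + f (q • x)) (ho : f =o[𝓝 0] fun x ↦ ‖x‖ ^ 2) (x : E) :
    f x ≤ 0 := by
  have bound (ε : ℝ) (hε : 0 < ε) : f x ≤ ε * ‖x‖ ^ 2 := by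
    refine le_mul_norm_sq_of_le_add_smul_of_eventually hε.le hp hq hpq hf ?_ x
    filter_upwards [ho.bound hε] with y hy
    simpa using (le_abs_self _).trans hy
  have lim : Tendsto (fun ε : ℝ ↦ ε * ‖x‖ ^ 2) (𝓝[>] 0) (𝓝 0) := by
    have h : Tendsto (fun ε : ℝ ↦ ε * ‖x‖ ^ 2) (𝓝 0) (𝓝 (0 * ‖x‖ ^ 2)) := tendsto_id.mul_const _
    rw [zero_mul] at h
    exact h.mono_left nhdsWithin_le_nhds
  exact ge_of_tendsto lim (eventually_nhdsWithin_of_forall bound)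

theorem norm_mul_sub_mul_le_add {R : Type*} [SeminormedRing R] {a b c d : R}
    (hb : ‖b‖ ≤ 1) (hc : ‖c‖ ≤ 1) : ‖a * b - c * d‖ ≤ ‖a - c‖ + ‖b - d‖ :=
  calc ‖a * b - c * d‖ = ‖(a - c) * b + c * (b - d)‖ := by congr 1; noncomm_ring
    _ ≤ ‖a - c‖ * ‖b‖ + ‖c‖ * ‖b - d‖ :=
      (norm_add_le _ _).trans (add_le_add (norm_mul_le _ _) (norm_mul_le _ _))
    _ ≤ ‖a - c‖ + ‖b - d‖ :=
      add_le_add (mul_le_of_le_one_right (norm_nonneg _) hb)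
        (mul_le_of_le_one_left (norm_nonneg _) hc)

theorem eq_of_eq_mul_smul_of_isLittleO_sub {R : Type*} [NormedRing R] {φ ψ : E → R}
    (hp : |p| < 1) (hq : |q| < 1) (hpq : p ^ 2 + q ^ 2 ≤ 1)
    (hφ : ∀ x, φ x = φ (p • x) * φ (q • x)) (hψ : ∀ x, ψ x = ψ (p • x) * ψ (q • x))
    (hφ1 : ∀ x, ‖φ x‖ ≤ 1) (hψ1 : ∀ x, ‖ψ x‖ ≤ 1)
    (ho : (fun x ↦ φ x - ψ x) =o[𝓝 0] fun x ↦ ‖x‖ ^ 2) : φ = ψ := by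
  funext x
  rw [← sub_eq_zero, ← norm_le_zero_iff]
  refine nonpos_of_le_add_smul_of_isLittleO hp hq hpq (fun y ↦ ?_) ho.norm_left x
  rw [hφ y, hψ y]
  exact norm_mul_sub_mul_le_add (hφ1 _) (hψ1 _)

end FunctionalEquation

theorem isLittleO_charFun_sub_charFun {μ ν : Measure ℝ} [IsFiniteMeasure μ] [IsFiniteMeasure ν]
    {n : ℕ} (hμ : MemLp id n μ) (hν : MemLp id n ν)
    (hmom : ∀ k ≤ n, ∫ x, x ^ k ∂μ = ∫ x, x ^ k ∂ν) :
    (fun t ↦ charFun μ t - charFun ν t) =o[𝓝 0] fun t ↦ t ^ n := by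
  have htaylor (t : ℝ) : taylorWithinEval (charFun μ) n Set.univ 0 t =
      taylorWithinEval (charFun ν) n Set.univ 0 t := by
    rw [taylorWithinEval_charFun_zero hμ, taylorWithinEval_charFun_zero hν]
    refine Finset.sum_congr rfl fun k hk ↦ ?_
    rw [hmom k (Nat.lt_succ_iff.1 (Finset.mem_range.1 hk))]
  have hdiff := (taylor_isLittleO_univ (x₀ := 0) (contDiff_charFun hμ)).sub
    (taylor_isLittleO_univ (x₀ := 0) (contDiff_charFun hν))
  simpa only [htaylor, sub_sub_sub_cancel_right, sub_zero] using hdiff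

/-- The smoothing transform of a law `μ` on the line: the law of `p Y + q Z`, where `Y` and `Z`
are independent with law `μ`. A strictly stable law is a fixed point for suitable `p, q`. -/
noncomputable def smoothingTransform (p q : ℝ) (μ : Measure ℝ) : Measure ℝ :=
  (μ.prod μ).map fun x ↦ p * x.1 + q * x.2

namespace smoothingTransform

variable {μ ν : Measure ℝ} {p q : ℝ}

theorem charFun_eq [SFinite μ] (p q t : ℝ) :
    charFun (smoothingTransform p q μ) t = charFun μ (p * t) * charFun μ (q * t) := by
  simp only [charFun_apply_real]
  rw [smoothingTransform, integral_map (by fun_prop) (by fun_prop), ← integral_prod_mul]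
  refine integral_congr_ae (.of_forall fun x ↦ ?_)
  simp only [← Complex.exp_add]
  push_cast
  ring_nf

theorem integral_id [IsProbabilityMeasure μ] (hμ : Integrable id μ) (p q : ℝ) :
    ∫ x, x ∂smoothingTransform p q μ = (p + q) * ∫ x, x ∂μ := by
  have h₁ : Integrable (fun x : ℝ × ℝ ↦ p * x.1) (μ.prod μ) := (hμ.comp_fst μ).const_mul p
  have h₂ : Integrable (fun x : ℝ × ℝ ↦ q * x.2) (μ.prod μ) := (hμ.comp_snd μ).const_mul q
  rw [smoothingTransform, integral_map (by fun_prop) (by fun_prop), integral_add h₁ h₂,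
    integral_const_mul, integral_const_mul, integral_fun_fst fun x ↦ x, integral_fun_snd fun x ↦ x]
  simp only [probReal_univ, one_smul]
  ring

theorem map_const_mul (c p q : ℝ) :
    (smoothingTransform p q μ).map (c * ·) = smoothingTransform (c * p) (c * q) μ := by
  rw [smoothingTransform, Measure.map_map (by fun_prop) (by fun_prop), smoothingTransform]
  congr 1
  ext x
  simp only [Function.comp_apply]
  ring

theorem isFixedPt_gaussianReal (hpq : p ^ 2 + q ^ 2 = 1) (v : NNReal) :
    Function.IsFixedPt (smoothingTransform p q) (gaussianReal 0 v) := by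
  have : IsFiniteMeasure (smoothingTransform p q (gaussianReal 0 v)) := by
    unfold smoothingTransform; infer_instance
  refine Measure.ext_of_charFun (funext fun t ↦ ?_)
  rw [charFun_eq, charFun_gaussianReal, charFun_gaussianReal, charFun_gaussianReal,
    ← Complex.exp_add]
  congr 1
  push_cast
  have hpqC : (p : ℂ) ^ 2 + (q : ℂ) ^ 2 = 1 := by exact_mod_cast hpq
  linear_combination (-(v * t ^ 2 / 2 : ℂ)) * hpqC

theorem integral_id_eq_zero_of_isFixedPt [IsProbabilityMeasure μ] (hμ : Integrable id μ)
    (hpq : p + q ≠ 1) (hfix : Function.IsFixedPt (smoothingTransform p q) μ) :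
    ∫ x, x ∂μ = 0 := by
  have hmean : ∫ x, x ∂μ = (p + q) * ∫ x, x ∂μ := by
    rw [← integral_id hμ, hfix.eq]
  by_contra hne
  exact hpq (mul_right_cancel₀ hne (by rw [one_mul, ← hmean]))

theorem eq_of_isFixedPt [IsProbabilityMeasure μ] [IsProbabilityMeasure ν]
    (hp : |p| < 1) (hq : |q| < 1) (hpq : p ^ 2 + q ^ 2 ≤ 1)
    (hμ : MemLp id 2 μ) (hν : MemLp id 2 ν)
    (hmean : ∫ x, x ∂μ = ∫ x, x ∂ν) (hsq : ∫ x, x ^ 2 ∂μ = ∫ x, x ^ 2 ∂ν)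
    (hμfix : Function.IsFixedPt (smoothingTransform p q) μ)
    (hνfix : Function.IsFixedPt (smoothingTransform p q) ν) : μ = ν := by
  have hmom : ∀ k ≤ 2, ∫ x, x ^ k ∂μ = ∫ x, x ^ k ∂ν := by
    intro k hk
    interval_cases k
    · simp
    · simpa using hmean
    · exact hsq
  refine Measure.ext_of_charFun (eq_of_eq_mul_smul_of_isLittleO_sub hp hq hpq
    (fun t ↦ ?_) (fun t ↦ ?_) norm_charFun_le_one norm_charFun_le_one ?_)
  · simp only [smul_eq_mul, ← charFun_eq, hμfix.eq]
  · simp only [smul_eq_mul, ← charFun_eq, hνfix.eq]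
  · simpa only [Real.norm_eq_abs, sq_abs] using isLittleO_charFun_sub_charFun hμ hν hmom

theorem eq_gaussianReal_of_isFixedPt [IsProbabilityMeasure μ] (hp : p ≠ 0) (hq : q ≠ 0)
    (hpq : p ^ 2 + q ^ 2 = 1) (hμ : MemLp id 2 μ)
    (hfix : Function.IsFixedPt (smoothingTransform p q) μ) :
    μ = gaussianReal 0 (∫ x, x ^ 2 ∂μ).toNNReal := by
  have hp1 : |p| < 1 := by
    rw [← sq_lt_one_iff_abs_lt_one]; linarith [sq_pos_of_ne_zero hq]
  have hq1 : |q| < 1 := by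
    rw [← sq_lt_one_iff_abs_lt_one]; linarith [sq_pos_of_ne_zero hp]
  have hsum : p + q ≠ 1 := by
    intro h
    exact mul_ne_zero hp hq (by linear_combination (p + q + 1) / 2 * h - hpq / 2)
  have hmean : ∫ x, x ∂μ = 0 :=
    integral_id_eq_zero_of_isFixedPt (hμ.integrable one_le_two) hsum hfix
  refine eq_of_isFixedPt hp1 hq1 hpq.le hμ (memLp_id_gaussianReal 2) ?_ ?_ hfix
    (isFixedPt_gaussianReal hpq _)
  · rw [hmean, integral_id_gaussianReal]
  · have hvar := variance_of_integral_eq_zero (μ := gaussianReal 0 (∫ x, x ^ 2 ∂μ).toNNReal)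
      aemeasurable_id integral_id_gaussianReal
    rw [variance_id_gaussianReal, Real.coe_toNNReal _ (by positivity)] at hvar
    exact hvar

theorem eq_map_add {Ω : Type*} [MeasurableSpace Ω] {P : Measure Ω} [IsFiniteMeasure P]
    {X Y : Ω → ℝ} (hident : IdentDistrib Y X P P) (hindep : IndepFun X Y P) (a b : ℝ) :
    smoothingTransform a b (P.map X) = P.map fun ω ↦ a * X ω + b * Y ω := by
  have hX := hident.aemeasurable_snd
  have hY := hident.aemeasurable_fst
  have hjoint := (indepFun_iff_map_prod_eq_prod_map_map hX hY).1 hindep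
  rw [hident.map_eq] at hjoint
  rw [smoothingTransform, ← hjoint,
    AEMeasurable.map_map_of_aemeasurable (by fun_prop) (by fun_prop)]
  rfl

theorem isFixedPt_of_eq_map_const_mul {a b c : ℝ} (hc : c ≠ 0)
    (h : smoothingTransform a b μ = μ.map (c * ·)) :
    Function.IsFixedPt (smoothingTransform (c⁻¹ * a) (c⁻¹ * b)) μ := by
  rw [Function.IsFixedPt, ← map_const_mul, h, Measure.map_map (by fun_prop) (by fun_prop)]
  convert Measure.map_id
  ext x
  simp [hc]

end smoothingTransform

theorem random_limit_normal_stmt0_general {Ω : Type*} [MeasurableSpace Ω] {P : Measure Ω}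
    [IsProbabilityMeasure P] {X Y : Ω → ℝ} (hX : MemLp X 2 P) (hident : IdentDistrib Y X P P)
    (hindep : IndepFun X Y P) {a b : ℝ} (ha : a ≠ 0) (hb : b ≠ 0)
    (hstable : P.map (fun ω ↦ a * X ω + b * Y ω) = P.map (fun ω ↦ √(a ^ 2 + b ^ 2) * X ω)) :
    P.map X = gaussianReal 0 (∫ ω, X ω ^ 2 ∂P).toNNReal := by
  have hXm : AEMeasurable X P := hX.aemeasurable
  have : IsProbabilityMeasure (P.map X) := Measure.isProbabilityMeasure_map hXm
  set c := √(a ^ 2 + b ^ 2)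
  have hc : c ≠ 0 := by positivity
  have hc_sq : c ^ 2 = a ^ 2 + b ^ 2 := Real.sq_sqrt (by positivity)
  have hscale : smoothingTransform a b (P.map X) = (P.map X).map (c * ·) := by
    rw [smoothingTransform.eq_map_add hident hindep, hstable,
      AEMeasurable.map_map_of_aemeasurable (by fun_prop) hXm]
    rfl
  have hnorm : (c⁻¹ * a) ^ 2 + (c⁻¹ * b) ^ 2 = 1 := by
    field_simp
    exact hc_sq.symm
  have hLp : MemLp id 2 (P.map X) := (memLp_map_measure_iff (by fun_prop) hXm).2 hX
  have hsq : ∫ x, x ^ 2 ∂P.map X = ∫ ω, X ω ^ 2 ∂P := integral_map hXm (by fun_prop)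
  rw [← hsq]
  exact smoothingTransform.eq_gaussianReal_of_isFixedPt (mul_ne_zero (inv_ne_zero hc) ha)
    (mul_ne_zero (inv_ne_zero hc) hb) hnorm hLp
    (smoothingTransform.isFixedPt_of_eq_map_const_mul hc hscale)

/-- If `E[X^2] = σ² < ∞`, `X̄` is an independent copy of `X`, and
`a X + b X̄ =_d √(a² + b²) X` for all `a, b > 0`, then `X ~ N(0, σ²)`. -/
theorem random_limit_normal_stmt0
    {Ω : Type*} [MeasurableSpace Ω] (P : Measure Ω) [IsProbabilityMeasure P]
    (X Xbar : Ω → ℝ) (hX : Measurable X) (hXbar : Measurable Xbar)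
    (σ : ℝ) (hσ : 0 < σ)
    (hint : Integrable (fun ω => (X ω) ^ 2) P)
    (hvar : ∫ ω, (X ω) ^ 2 ∂P = σ ^ 2)
    (hindep : IndepFun X Xbar P)
    (hsame : Measure.map Xbar P = Measure.map X P)
    (hstable : ∀ a b : ℝ, 0 < a → 0 < b →
      Measure.map (fun ω => a * X ω + b * Xbar ω) P
        = Measure.map (fun ω => Real.sqrt (a ^ 2 + b ^ 2) * X ω) P) :
    Measure.map X P = gaussianReal 0 (Real.toNNReal (σ ^ 2)) := by
  rw [← hvar]
  exact random_limit_normal_stmt0_general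
    ((memLp_two_iff_integrable_sq hX.aestronglyMeasurable).2 hint)
    ⟨hXbar.aemeasurable, hX.aemeasurable, hsame⟩ hindep one_ne_zero one_ne_zero
    (hstable 1 1 one_pos one_pos)
end

section
/- (Theorem 2.3, case 1, monotonicity.) Let σ > 0 and let h : ℝ → (0, ∞) be continuous, monotone nondecreasing on (−∞, 0) and monotone nonincreasing on [0, ∞). Define the random limit normal function F(y) = G(y, σ·h(y)) = (1/√(2π(σh(y))²)) ∫_{−∞}^{y} exp(−x²/(2(σh(y))²)) dx. Then F is monotone nondecreasing on all of ℝ. -/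
/-- The CDF at `y` of a centered normal distribution with standard deviation `s`. -/
noncomputable def gaussCDF (y s : ℝ) : ℝ :=
  (Real.sqrt (2 * Real.pi * s ^ 2))⁻¹ * ∫ x in Set.Iic y, Real.exp (-x ^ 2 / (2 * s ^ 2))

/-! Standardization gives `gaussCDF y s = Φ (y / s)` for `0 < s`, where `Φ` is the standard normal
CDF. Since `Φ` is monotone, it suffices that `y / (σ * h y)` is monotone in `y`: it has the sign of
`y`, and its absolute value grows with `|y|` on each side of `0`, because `h` decreases away from
`0`. -/

open MeasureTheory ProbabilityTheory Set

theorem gaussCDF_eq_cdf_gaussianReal {s : ℝ} (hs : s ≠ 0) (y : ℝ) :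
    gaussCDF y s = cdf (gaussianReal 0 (.mk (s ^ 2) (sq_nonneg s))) y := by
  have hv : NNReal.mk (s ^ 2) (sq_nonneg s) ≠ 0 := by
    simpa [← NNReal.coe_ne_zero] using hs
  rw [cdf_eq_real, measureReal_def, gaussianReal_apply_eq_integral 0 hv,
    ENNReal.toReal_ofReal (integral_nonneg (gaussianPDFReal_nonneg 0 _))]
  simp only [gaussCDF, gaussianPDFReal, sub_zero, NNReal.coe_mk, integral_const_mul]

theorem cdf_map_const_mul {μ : Measure ℝ} [IsProbabilityMeasure μ] {c : ℝ} (hc : 0 < c) (y : ℝ) :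
    cdf (μ.map (c * ·)) y = cdf μ (y / c) := by
  have hmeas : Measurable (c * · : ℝ → ℝ) := measurable_const_mul c
  have : IsProbabilityMeasure (μ.map (c * ·)) := Measure.isProbabilityMeasure_map hmeas.aemeasurable
  rw [cdf_eq_real, cdf_eq_real, map_measureReal_apply hmeas measurableSet_Iic,
    preimage_const_mul_Iic₀ y hc]

theorem gaussCDF_eq_cdf_gaussianReal_div {s : ℝ} (hs : 0 < s) (y : ℝ) :
    gaussCDF y s = cdf (gaussianReal 0 1) (y / s) := by
  rw [gaussCDF_eq_cdf_gaussianReal hs.ne', ← cdf_map_const_mul hs, gaussianReal_map_const_mul,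
    mul_zero, mul_one]

section OrderedField

variable {α : Type*} [Field α] [LinearOrder α] [IsStrictOrderedRing α]

theorem div_le_div_of_nonpos {a b c d : α} (hb : b ≤ 0) (hab : a ≤ b) (hc : 0 < c) (hcd : c ≤ d) :
    a / c ≤ b / d := by
  have h : -b / d ≤ -a / c :=
    div_le_div₀ (neg_nonneg.2 (hab.trans hb)) (neg_le_neg hab) hc hcd
  simpa only [neg_div, neg_le_neg_iff] using h

theorem monotone_div_of_monotoneOn_of_antitoneOn {h : α → α} (hpos : ∀ y, 0 < h y)
    (hmono : MonotoneOn h (Iio 0)) (hanti : AntitoneOn h (Ioi 0)) :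
    Monotone fun y ↦ y / h y := by
  intro a b hab
  rcases lt_or_ge b 0 with hb | hb
  · have ha : a < 0 := hab.trans_lt hb
    exact div_le_div_of_nonpos hb.le hab (hpos a) (hmono ha hb hab)
  rcases le_or_gt a 0 with ha | ha
  · exact (div_nonpos_of_nonpos_of_nonneg ha (hpos a).le).trans (div_nonneg hb (hpos b).le)
  · exact div_le_div₀ hb hab (hpos b) (hanti ha (ha.trans_le hab) hab)

end OrderedField

theorem random_limit_normal_stmt5_general
    {σ : ℝ} (hσ : 0 < σ) {h : ℝ → ℝ} (hpos : ∀ y, 0 < h y)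
    (hmono : MonotoneOn h (Iio 0)) (hanti : AntitoneOn h (Ioi 0)) :
    Monotone fun y ↦ gaussCDF y (σ * h y) := by
  have hdiv : Monotone fun y ↦ y / (σ * h y) :=
    monotone_div_of_monotoneOn_of_antitoneOn (fun y ↦ mul_pos hσ (hpos y))
      (fun _ ha _ hb hab ↦ mul_le_mul_of_nonneg_left (hmono ha hb hab) hσ.le)
      (fun _ ha _ hb hab ↦ mul_le_mul_of_nonneg_left (hanti ha hb hab) hσ.le)
  simp only [gaussCDF_eq_cdf_gaussianReal_div (mul_pos hσ (hpos _))]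
  exact (monotone_cdf (gaussianReal 0 1)).comp hdiv

/-- Theorem 2.3, case 1, monotonicity: if `h` is positive, continuous, nondecreasing on
`(-∞, 0)` and nonincreasing on `[0, ∞)`, then the random limit normal function
`F(y) = G(y, σ h(y))` is monotone nondecreasing on ℝ. -/
theorem random_limit_normal_stmt5
    (σ : ℝ) (hσ : 0 < σ) (h : ℝ → ℝ) (hpos : ∀ y, 0 < h y) (hcont : Continuous h)
    (hmono : MonotoneOn h (Set.Iio 0)) (hanti : AntitoneOn h (Set.Ici 0))
    (F : ℝ → ℝ) (hF : ∀ y, F y = gaussCDF y (σ * h y)) :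
    Monotone F := by
  rw [funext hF]
  exact random_limit_normal_stmt5_general hσ hpos hmono (hanti.mono Ioi_subset_Ici_self)
end

section
/- (Theorem 2.3, case 1, limit at −∞.) Let σ > 0 and let h : ℝ → (0, ∞) be continuous, monotone nondecreasing on (−∞, 0) and monotone nonincreasing on [0, ∞). Define F(y) = G(y, σ·h(y)). Then F(y) → 0 as y → −∞. -/
/-!
For `s > 0`, scaling by `s` carries the standard normal law to the centered one with standard
deviation `s`, so `G(y, s) = Φ(y / s)` with `Φ` the standard normal CDF. Hence `G(y, s) → 0` as
soon as `y / s → -∞`. For `s = σ h(y)` and `y → -∞` this holds whenever `h(y) = o(y)`, in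
particular when `h` is positive and nondecreasing near `-∞`, for then it is bounded there.
-/

open Asymptotics Filter MeasureTheory ProbabilityTheory Set
open scoped NNReal Topology

section Asymptotics

variable {α : Type*} {l : Filter α}

lemma tendsto_div_atBot_of_isLittleO {f g : α → ℝ} (hf : ∀ᶠ x in l, f x < 0)
    (hg : ∀ᶠ x in l, 0 < g x) (hgf : g =o[l] f) :
    Tendsto (fun x ↦ f x / g x) l atBot := by
  have hneg : ∀ᶠ x in l, g x / f x < 0 := by
    filter_upwards [hf, hg] with x hfx hgx using div_neg_of_pos_of_neg hgx hfx
  have hlim : Tendsto (fun x ↦ g x / f x) l (𝓝[<] 0) :=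
    tendsto_nhdsWithin_iff.2 ⟨hgf.tendsto_div_nhds_zero, hneg⟩
  simpa only [Function.comp_def, inv_div] using tendsto_inv_nhdsLT_zero.comp hlim

lemma isBigO_one_atBot_of_monotoneOn_Iio [LinearOrder α] [NoMinOrder α] {f : α → ℝ} {a : α}
    (hf : MonotoneOn f (Iio a)) (hnonneg : ∀ᶠ y in atBot, 0 ≤ f y) :
    f =O[atBot] fun _ ↦ (1 : ℝ) := by
  obtain ⟨b, hba⟩ := exists_lt a
  refine IsBigO.of_bound (f b) ?_
  filter_upwards [hnonneg, eventually_le_atBot b] with y hy hyb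
  rw [Real.norm_of_nonneg hy, norm_one, mul_one]
  exact hf (hyb.trans_lt hba) hba hyb

end Asymptotics

lemma gaussCDF_eq_real_gaussianReal (y : ℝ) {s : ℝ≥0} (hs : s ≠ 0) :
    gaussCDF y s = (gaussianReal 0 (s ^ 2)).real (Iic y) := by
  rw [measureReal_def, gaussianReal_apply_eq_integral 0 (pow_ne_zero 2 hs),
    ENNReal.toReal_ofReal (integral_nonneg (gaussianPDFReal_nonneg 0 _))]
  simp only [gaussCDF, gaussianPDFReal, sub_zero, NNReal.coe_pow, integral_const_mul]

lemma gaussianReal_real_Iic_eq_cdf (y : ℝ) {s : ℝ≥0} (hs : s ≠ 0) :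
    (gaussianReal 0 (s ^ 2)).real (Iic y) = cdf (gaussianReal 0 1) (y / s) := by
  have hscale : (gaussianReal 0 1).map ((s : ℝ) * ·) = gaussianReal 0 (s ^ 2) := by
    rw [gaussianReal_map_const_mul, mul_zero, mul_one]
    rfl
  rw [← hscale, map_measureReal_apply (measurable_const_mul _) measurableSet_Iic,
    preimage_const_mul_Iic₀ y (NNReal.coe_pos.2 hs.bot_lt), cdf_eq_real]

lemma gaussCDF_eq_cdf (y : ℝ) {s : ℝ} (hs : 0 < s) :
    gaussCDF y s = cdf (gaussianReal 0 1) (y / s) := by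
  lift s to ℝ≥0 using hs.le
  have hs₀ : s ≠ 0 := (NNReal.coe_pos.1 hs).ne'
  rw [gaussCDF_eq_real_gaussianReal y hs₀, gaussianReal_real_Iic_eq_cdf y hs₀]

lemma tendsto_gaussCDF_nhds_zero {α : Type*} {l : Filter α} {y s : α → ℝ}
    (hs : ∀ᶠ x in l, 0 < s x) (hys : Tendsto (fun x ↦ y x / s x) l atBot) :
    Tendsto (fun x ↦ gaussCDF (y x) (s x)) l (𝓝 0) := by
  refine ((tendsto_cdf_atBot (gaussianReal 0 1)).comp hys).congr' ?_
  filter_upwards [hs] with x hx using (gaussCDF_eq_cdf (y x) hx).symm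

theorem random_limit_normal_stmt7_general (σ : ℝ) (hσ : 0 < σ) (h : ℝ → ℝ)
    (hpos : ∀ᶠ y in atBot, 0 < h y) (hlittle : h =o[atBot] id) :
    Tendsto (fun y ↦ gaussCDF y (σ * h y)) atBot (𝓝 0) := by
  have hσh : ∀ᶠ y in atBot, 0 < σ * h y := hpos.mono fun _ hy ↦ mul_pos hσ hy
  exact tendsto_gaussCDF_nhds_zero hσh <|
    tendsto_div_atBot_of_isLittleO (eventually_lt_atBot 0) hσh (hlittle.const_mul_left σ)

/-- Theorem 2.3, case 1, limit at `-∞`: if `h` is positive, continuous, nondecreasing on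
`(-∞, 0)` and nonincreasing on `[0, ∞)`, then the random limit normal function
`F(y) = G(y, σ h(y))` tends to `0` as `y → -∞`. -/
theorem random_limit_normal_stmt7
    (σ : ℝ) (hσ : 0 < σ) (h : ℝ → ℝ) (hpos : ∀ y, 0 < h y) (hcont : Continuous h)
    (hmono : MonotoneOn h (Set.Iio 0)) (hanti : AntitoneOn h (Set.Ici 0))
    (F : ℝ → ℝ) (hF : ∀ y, F y = gaussCDF y (σ * h y)) :
    Filter.Tendsto F Filter.atBot (nhds 0) := by
  obtain rfl : F = fun y ↦ gaussCDF y (σ * h y) := funext hF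
  exact random_limit_normal_stmt7_general σ hσ h (.of_forall hpos) <|
    (isBigO_one_atBot_of_monotoneOn_Iio hmono (.of_forall fun y ↦ (hpos y).le)).trans_isLittleO
      (isLittleO_const_id_atBot 1)
end

section
/- Let K < 0 and define g̃(m) = exp(−m²/2) + K·∫_{−∞}^{m} exp(−z²/2)·(z² − 1) dz for m ∈ ℝ. Then g̃ is differentiable with derivative g̃′(m) = exp(−m²/2)·(K·m² − m − K), and g̃ is strictly increasing on the interval (1/K, 0]. -/
/-!
Since `-z exp(-z²/2)` is a primitive of `exp(-z²/2) (z² - 1)` vanishing at `-∞`, the function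
`g̃` is just `(1 - K m) exp(-m²/2)`, and the formula for its derivative follows. The quadratic
factor `K m² - m - K` has discriminant `1 + 4 K² > 0`, hence no double root: on an interval where
it is nonnegative it can vanish only at the end points, so `g̃` is strictly increasing there. On
`(1/K, 0]` it equals `m (K m - 1) + (-K)`, a sum of nonnegative terms.
-/

open MeasureTheory Polynomial Set

theorem integral_Iic_of_hasDerivAt_of_integrableOn {E : Type*} [NormedAddCommGroup E]
    [NormedSpace ℝ E] [CompleteSpace E] {f f' : ℝ → E} {a : ℝ}
    (hderiv : ∀ x ∈ Iic a, HasDerivAt f (f' x) x) (hf' : IntegrableOn f' (Iic a))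
    (hf : IntegrableOn f (Iic a)) : ∫ x in Iic a, f' x = f a := by
  have hlim := tendsto_zero_of_hasDerivAt_of_integrableOn_Iic hderiv hf' hf
  rw [integral_Iic_of_hasDerivAt_of_tendsto' hderiv hf' hlim, sub_zero]

section PolynomialMulGaussian

theorem hasDerivAt_eval_mul_exp_neg_mul_sq (p : ℝ[X]) (b x : ℝ) :
    HasDerivAt (fun x ↦ p.eval x * Real.exp (-b * x ^ 2))
      ((derivative p - C (2 * b) * X * p).eval x * Real.exp (-b * x ^ 2)) x := by
  have hexp : HasDerivAt (fun x ↦ Real.exp (-b * x ^ 2))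
      (Real.exp (-b * x ^ 2) * (-b * (2 * x))) x := by
    simpa using ((hasDerivAt_pow 2 x).const_mul (-b)).exp
  refine ((p.hasDerivAt x).mul hexp).congr_deriv ?_
  simp only [eval_sub, eval_mul, eval_C, eval_X]
  ring

variable {b : ℝ} (hb : 0 < b) (p : ℝ[X])
include hb

theorem integrable_eval_mul_exp_neg_mul_sq :
    Integrable fun x ↦ p.eval x * Real.exp (-b * x ^ 2) := by
  induction p using Polynomial.induction_on' with
  | add p q hp hq => simpa only [eval_add, add_mul] using hp.fun_add hq
  | monomial n a =>
    have hn : (-1 : ℝ) < n := neg_one_lt_zero.trans_le n.cast_nonneg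
    simpa only [eval_monomial, Real.rpow_natCast, mul_assoc] using
      (integrable_rpow_mul_exp_neg_mul_sq hb hn).const_mul a

theorem integral_Iic_eval_mul_exp_neg_mul_sq (m : ℝ) :
    ∫ x in Iic m, (derivative p - C (2 * b) * X * p).eval x * Real.exp (-b * x ^ 2) =
      p.eval m * Real.exp (-b * m ^ 2) :=
  integral_Iic_of_hasDerivAt_of_integrableOn
    (fun x _ ↦ hasDerivAt_eval_mul_exp_neg_mul_sq p b x)
    (integrable_eval_mul_exp_neg_mul_sq hb _).integrableOn
    (integrable_eval_mul_exp_neg_mul_sq hb p).integrableOn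

end PolynomialMulGaussian

theorem integral_Iic_exp_neg_sq_div_two_mul_sq_sub_one (m : ℝ) :
    ∫ z in Iic m, Real.exp (-z ^ 2 / 2) * (z ^ 2 - 1) = -m * Real.exp (-m ^ 2 / 2) := by
  convert integral_Iic_eval_mul_exp_neg_mul_sq one_half_pos (-X) m using 1
  · congr! 2 with z
    simp only [derivative_neg, derivative_X, eval_sub, eval_neg, eval_one, eval_mul, eval_C, eval_X]
    ring_nf
  · rw [eval_neg, eval_X]
    ring_nf

theorem hasDerivAt_exp_neg_sq_div_two_mul_one_sub (K m : ℝ) :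
    HasDerivAt (fun m ↦ Real.exp (-m ^ 2 / 2) * (1 - K * m))
      (Real.exp (-m ^ 2 / 2) * (K * m ^ 2 - m - K)) m := by
  convert hasDerivAt_eval_mul_exp_neg_mul_sq (1 - C K * X) (1 / 2) m using 1
  · funext m
    simp only [eval_sub, eval_one, eval_mul, eval_C, eval_X]
    ring_nf
  · simp only [derivative_sub, derivative_one, derivative_C_mul, derivative_X, eval_sub, eval_zero,
      eval_one, eval_mul, eval_C, eval_X]
    ring_nf

theorem quadratic_pos_of_mem_interior {a b c : ℝ} (hdiscrim : discrim a b c ≠ 0) {s : Set ℝ}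
    (hs : ∀ x ∈ s, 0 ≤ a * (x * x) + b * x + c) {x : ℝ} (hx : x ∈ interior s) :
    0 < a * (x * x) + b * x + c := by
  refine (hs x (interior_subset hx)).lt_of_ne' fun hroot ↦ hdiscrim ?_
  have hmin : IsLocalMin (fun y ↦ a * (y * y) + b * y + c) x := by
    filter_upwards [mem_interior_iff_mem_nhds.1 hx] with y hy
    exact hroot.trans_le (hs y hy)
  have hderiv : HasDerivAt (fun y ↦ a * (y * y) + b * y + c) (2 * a * x + b) x := by
    have hid := hasDerivAt_id' x
    refine ((((hid.mul hid).const_mul a).add (hid.const_mul b)).add_const c).congr_deriv ?_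
    ring
  rw [discrim_eq_sq_of_quadratic_eq_zero hroot, hmin.hasDerivAt_eq_zero hderiv,
    zero_pow two_ne_zero]

theorem mul_sq_sub_sub_pos_of_mem_interior {K : ℝ} {s : Set ℝ}
    (hs : ∀ m ∈ s, 0 ≤ K * m ^ 2 - m - K) {m : ℝ} (hm : m ∈ interior s) :
    0 < K * m ^ 2 - m - K := by
  have hdiscrim : discrim K (-1) (-K) ≠ 0 := by
    rw [show discrim K (-1) (-K) = 1 + 4 * K ^ 2 by rw [discrim]; ring]
    positivity
  have hform (x : ℝ) : K * x ^ 2 - x - K = K * (x * x) + -1 * x + -K := by ring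
  simp only [hform] at hs ⊢
  exact quadratic_pos_of_mem_interior hdiscrim hs hm

theorem mul_sq_sub_sub_nonneg {K m : ℝ} (hK : K ≤ 0) (hm : m ≤ 0) (hKm : K * m ≤ 1) :
    0 ≤ K * m ^ 2 - m - K :=
  calc
    0 ≤ m * (K * m - 1) + -K :=
      add_nonneg (mul_nonneg_of_nonpos_of_nonpos hm (sub_nonpos.2 hKm)) (neg_nonneg.2 hK)
    _ = K * m ^ 2 - m - K := by ring

theorem random_limit_normal_stmt12_general (K : ℝ) (g : ℝ → ℝ)
    (hg : ∀ m, g m = Real.exp (-m ^ 2 / 2)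
      + K * ∫ z in Iic m, Real.exp (-z ^ 2 / 2) * (z ^ 2 - 1)) :
    (∀ m, HasDerivAt g (Real.exp (-m ^ 2 / 2) * (K * m ^ 2 - m - K)) m) ∧
    ∀ s : Set ℝ, Convex ℝ s → (∀ m ∈ s, 0 ≤ K * m ^ 2 - m - K) → StrictMonoOn g s := by
  have hclosed : g = fun m ↦ Real.exp (-m ^ 2 / 2) * (1 - K * m) := by
    funext m
    rw [hg, integral_Iic_exp_neg_sq_div_two_mul_sq_sub_one]
    ring
  have hderiv (m : ℝ) : HasDerivAt g (Real.exp (-m ^ 2 / 2) * (K * m ^ 2 - m - K)) m :=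
    hclosed ▸ hasDerivAt_exp_neg_sq_div_two_mul_one_sub K m
  refine ⟨hderiv, fun s hconv hs ↦ strictMonoOn_of_deriv_pos hconv
    (HasDerivAt.continuousOn fun m _ ↦ hderiv m) fun m hm ↦ ?_⟩
  rw [(hderiv m).deriv]
  exact mul_pos (Real.exp_pos _) (mul_sq_sub_sub_pos_of_mem_interior hs hm)

/-- For `K < 0`, the function `g̃(m) = exp(-m²/2) + K ∫_{-∞}^m exp(-z²/2)(z² - 1) dz`
is differentiable with derivative `exp(-m²/2) (K m² - m - K)`, and is strictly
increasing on `(1/K, 0]`. -/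
theorem random_limit_normal_stmt12 (K : ℝ) (hK : K < 0)
    (g : ℝ → ℝ)
    (hg : ∀ m, g m = Real.exp (-m ^ 2 / 2)
      + K * ∫ z in Set.Iic m, Real.exp (-z ^ 2 / 2) * (z ^ 2 - 1)) :
    (∀ m, HasDerivAt g (Real.exp (-m ^ 2 / 2) * (K * m ^ 2 - m - K)) m) ∧
    StrictMonoOn g (Set.Ioc (1 / K) 0) := by
  obtain ⟨hderiv, hmono⟩ := random_limit_normal_stmt12_general K g hg
  exact ⟨hderiv, hmono _ (convex_Ioc _ _) fun m hm ↦
    mul_sq_sub_sub_nonneg hK.le hm.2 ((div_lt_iff_of_neg' hK).1 hm.1).le⟩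
end
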